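/- Let f(x₁, x₂, x₃) = x₂² − 2x₂ + 1 − 2x₁x₂x₃ + x₁x₂x₃² + x₁²x₂, a signomial on ℝ³_{>0}. Then the actual negative normal cone of f is Σ(f) = {0}; that is, f itself attains a negative value on ℝ³_{>0} (e.g. f(1/2, 1, 1/2) = −1/8 < 0), while for every v ∈ ℝ³ with v ≠ 0, the restriction f_{|N(f)_v} is nonnegative on ℝ³_{>0}. -/

import Mathlib

/-- A signomial on the positive orthant `ℝⁿ_{>0}`: a function
`x ↦ ∑_{μ ∈ supp} coeff μ * x ^ μ` with finite support and nonzero coefficients. -/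
structure Signomial (n : ℕ) where
  supp : Finset (Fin n → ℝ)
  coeff : (Fin n → ℝ) → ℝ
  coeff_ne_zero : ∀ μ ∈ supp, coeff μ ≠ 0
  coeff_eq_zero : ∀ μ ∉ supp, coeff μ = 0

namespace Signomial

variable {n : ℕ}

/-- The monomial `x^μ = ∏ i, x i ^ μ i` (real exponents). -/
noncomputable def mono (x μ : Fin n → ℝ) : ℝ := ∏ i, x i ^ μ i

/-- Evaluation of a signomial. -/
noncomputable def eval (f : Signomial n) (x : Fin n → ℝ) : ℝ :=
  ∑ μ ∈ f.supp, f.coeff μ * mono x μ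

open Classical in
/-- Evaluation of the restriction `f_{|S}` of `f` to a set `S ⊆ ℝⁿ`. -/
noncomputable def evalOn (f : Signomial n) (S : Set (Fin n → ℝ)) (x : Fin n → ℝ) : ℝ :=
  ∑ μ ∈ f.supp, if μ ∈ S then f.coeff μ * mono x μ else 0

/-- The Newton polytope `N(f) = conv(σ(f))`. -/
def newton (f : Signomial n) : Set (Fin n → ℝ) :=
  convexHull ℝ (f.supp : Set (Fin n → ℝ))

/-- Euclidean scalar product on `Fin n → ℝ`. -/
noncomputable def dot (v μ : Fin n → ℝ) : ℝ := ∑ i, v i * μ i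

/-- The face `N(f)_v` of the Newton polytope cut out by `v`. -/
def faceAt (f : Signomial n) (v : Fin n → ℝ) : Set (Fin n → ℝ) :=
  {μ ∈ f.newton | ∀ ν ∈ f.newton, dot v ν ≤ dot v μ}

/-- `F` is a (nonempty, exposed) face of the Newton polytope of `f`. -/
def IsFace (f : Signomial n) (F : Set (Fin n → ℝ)) : Prop :=
  F.Nonempty ∧ ∃ v, F = f.faceAt v

/-- The (outer) normal cone of a face `F` of `N(f)`. -/
def normalCone (f : Signomial n) (F : Set (Fin n → ℝ)) : Set (Fin n → ℝ) :=
  {v | F ⊆ f.faceAt v}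

/-- The negative normal cone `N_f^- = {v | N(f)_v ∩ σ₋(f) ≠ ∅}`. -/
def negCone (f : Signomial n) : Set (Fin n → ℝ) :=
  {v | ∃ μ ∈ f.supp, f.coeff μ < 0 ∧ μ ∈ f.faceAt v}

/-- The positive orthant `ℝⁿ_{>0}`. -/
def posOrth (n : ℕ) : Set (Fin n → ℝ) := {x | ∀ i, 0 < x i}

/-- `S(f) = f⁻¹(ℝ_{<0})` (inside the positive orthant). -/
def negSet₁ (f : Signomial n) : Set (Fin n → ℝ) :=
  {x ∈ posOrth n | f.eval x < 0}

/-- `S(f₁, …, f_k) = ⋂ᵢ fᵢ⁻¹(ℝ_{<0})` (inside the positive orthant). -/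
def negSet {k : ℕ} (f : Fin k → Signomial n) : Set (Fin n → ℝ) :=
  {x ∈ posOrth n | ∀ i, (f i).eval x < 0}

/-- The actual negative normal cone `Σ(f)` of a single signomial. -/
def actualNegCone₁ (f : Signomial n) : Set (Fin n → ℝ) :=
  {v | ∃ x ∈ posOrth n, f.evalOn (f.faceAt v) x < 0}

/-- The actual negative normal cone `Σ(f₁, …, f_k)`. -/
def actualNegCone {k : ℕ} (f : Fin k → Signomial n) : Set (Fin n → ℝ) :=
  {v | ∃ x ∈ posOrth n, ∀ i, (f i).evalOn ((f i).faceAt v) x < 0}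

/-- The real tropicalization (logarithmic limit set) of `S ⊆ ℝⁿ_{>0}`:
`w ∈ Trop(S)` iff there are sequences `x(m) ∈ S`, `t(m) ∈ (1,∞)` with `t(m) → ∞` and
`Log_{t(m)}(x(m)) → w`. -/
def trop (S : Set (Fin n → ℝ)) : Set (Fin n → ℝ) :=
  {w | ∃ (x : ℕ → Fin n → ℝ) (t : ℕ → ℝ),
    (∀ m, x m ∈ S) ∧ (∀ m, 1 < t m) ∧
    Filter.Tendsto t Filter.atTop Filter.atTop ∧
    Filter.Tendsto (fun m i => Real.log (x m i) / Real.log (t m))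
      Filter.atTop (nhds w)}

open Classical in
/-- The support of the restriction `f_{|F}`, i.e. `σ(f) ∩ F`. -/
noncomputable def restSupp (f : Signomial n) (F : Set (Fin n → ℝ)) : Finset (Fin n → ℝ) :=
  f.supp.filter (fun μ => μ ∈ F)

/-- Evaluation of the signomial with coefficient vector `c ∈ ℝ^A`. -/
noncomputable def evalVec (A : Finset (Fin n → ℝ)) (c : A → ℝ) (x : Fin n → ℝ) : ℝ :=
  ∑ μ : A, c μ * mono x (μ : Fin n → ℝ)

/-- The nonnegativity cone `P⁺_A ⊆ ℝ^A`. -/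
def nonnegConeSet (A : Finset (Fin n → ℝ)) : Set (A → ℝ) :=
  {c | ∀ x ∈ posOrth n, 0 ≤ evalVec A c x}

/-- The coefficient vector of `f` viewed in `ℝ^A`. -/
def coeffVec (f : Signomial n) (A : Finset (Fin n → ℝ)) : A → ℝ :=
  fun μ => f.coeff μ

/-- The non-boundary condition (NB): for every face `F` of `N(f)`, if `f_{|F}` is
nonnegative on the positive orthant then it lies in the interior of the nonnegativity
cone `P⁺_{σ(f) ∩ F}`. -/
def NBcond (f : Signomial n) : Prop :=
  ∀ F : Set (Fin n → ℝ), f.IsFace F →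
    coeffVec f (f.restSupp F) ∈ nonnegConeSet (f.restSupp F) →
    coeffVec f (f.restSupp F) ∈ interior (nonnegConeSet (f.restSupp F))

end Signomial

namespace Signomial

lemma dot3 (v μ : Fin 3 → ℝ) : dot v μ = v 0 * μ 0 + v 1 * μ 1 + v 2 * μ 2 := by
  simp [dot, Fin.sum_univ_three]

lemma mem_faceAt_iff (f : Signomial 3) (v μ : Fin 3 → ℝ) (h : μ ∈ f.supp) :
    μ ∈ f.faceAt v ↔ ∀ ν ∈ f.supp, dot v ν ≤ dot v μ := by
  constructor
  · intro hm ν hν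
    exact hm.2 ν (subset_convexHull ℝ _ hν)
  · intro H
    refine ⟨subset_convexHull ℝ _ h, ?_⟩
    intro ν hν
    have hc : Convex ℝ {ν : Fin 3 → ℝ | dot v ν ≤ dot v μ} := by
      intro a ha b hb s t hs ht hst
      simp only [Set.mem_ofPred_eq] at *
      have e : dot v (s • a + t • b) = s * dot v a + t * dot v b := by
        simp [dot3]; ring
      rw [e]
      have e2 : dot v μ = s * dot v μ + t * dot v μ := by rw [← add_mul, hst, one_mul]
      rw [e2]
      gcongr
    exact convexHull_min (fun x hx => H x hx) hc hν

lemma mono3 (x : Fin 3 → ℝ) (a b c : ℝ) :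
    mono x ![a, b, c] = x 0 ^ a * x 1 ^ b * x 2 ^ c := by
  simp [mono, Fin.prod_univ_three]

lemma sum_supp (g : (Fin 3 → ℝ) → ℝ) (S : Finset (Fin 3 → ℝ)) (hsupp : S =
      {![0, 2, 0], ![0, 1, 0], ![0, 0, 0], ![1, 1, 1], ![1, 1, 2], ![2, 1, 0]}) :
    ∑ μ ∈ S, g μ = g ![0, 2, 0] + (g ![0, 1, 0] + (g ![0, 0, 0] + (g ![1, 1, 1] +
      (g ![1, 1, 2] + g ![2, 1, 0])))) := by
  subst hsupp
  rw [Finset.sum_insert, Finset.sum_insert, Finset.sum_insert, Finset.sum_insert,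
    Finset.sum_insert, Finset.sum_singleton] <;> simp

end Signomial

open Signomial in
/-- For `f = x₂² − 2x₂ + 1 − 2x₁x₂x₃ + x₁x₂x₃² + x₁²x₂`, the actual
negative normal cone is `Σ(f) = {0}`: `f` attains a negative value on `ℝ³_{>0}`
(e.g. `f(1/2, 1, 1/2) = −1/8`), while for every `v ≠ 0` the restriction `f_{|N(f)_v}`
is nonnegative on `ℝ³_{>0}`. -/
theorem actualNegCone_eq_zero_example (f : Signomial 3)
    (hsupp : f.supp =
      {![0, 2, 0], ![0, 1, 0], ![0, 0, 0], ![1, 1, 1], ![1, 1, 2], ![2, 1, 0]})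
    (c1 : f.coeff ![0, 2, 0] = 1) (c2 : f.coeff ![0, 1, 0] = -2)
    (c3 : f.coeff ![0, 0, 0] = 1) (c4 : f.coeff ![1, 1, 1] = -2)
    (c5 : f.coeff ![1, 1, 2] = 1) (c6 : f.coeff ![2, 1, 0] = 1) :
    actualNegCone₁ f = {0} ∧
    f.eval ![1/2, 1, 1/2] = -(1/8) ∧
    (∀ v : Fin 3 → ℝ, v ≠ 0 → ∀ x ∈ posOrth 3, 0 ≤ f.evalOn (f.faceAt v) x) := by
  have hev : f.eval ![1/2, 1, 1/2] = -(1/8) := by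
    unfold eval
    rw [sum_supp _ _ hsupp, c1, c2, c3, c4, c5, c6]
    simp only [mono3]
    simp
    norm_num
  have hpos : ∀ v : Fin 3 → ℝ, v ≠ 0 → ∀ x ∈ posOrth 3, 0 ≤ f.evalOn (f.faceAt v) x := by
    classical
    intro v hv x hx
    have h0 : 0 < x 0 := hx 0
    have h1 : 0 < x 1 := hx 1
    have h2 : 0 < x 2 := hx 2
    have key : ∀ μ ∈ f.supp, (μ ∈ f.faceAt v ↔ ∀ ν ∈ f.supp, dot v ν ≤ dot v μ) :=
      fun μ h => mem_faceAt_iff f v μ h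
    have hD : ![1, 1, 1] ∉ f.faceAt v := by
      rw [key _ (by simp [hsupp])]
      intro H
      apply hv
      simp only [hsupp, Finset.mem_insert, Finset.mem_singleton, forall_eq_or_imp, forall_eq,
        dot3] at H
      simp at H
      obtain ⟨a, b, c, d, e⟩ := H
      ext i
      fin_cases i <;> simp <;> linarith
    have hB : ![0, 1, 0] ∈ f.faceAt v → ![0, 2, 0] ∈ f.faceAt v ∧ ![0, 0, 0] ∈ f.faceAt v := by
      rw [key _ (by simp [hsupp]), key _ (by simp [hsupp]), key _ (by simp [hsupp])]
      intro H
      have hA := H ![0, 2, 0] (by simp [hsupp])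
      have hC := H ![0, 0, 0] (by simp [hsupp])
      refine ⟨fun ν hν => (H ν hν).trans ?_, fun ν hν => (H ν hν).trans ?_⟩ <;>
      · simp [dot3] at hA hC ⊢
        linarith
    unfold evalOn
    rw [sum_supp _ _ hsupp, c1, c2, c3, c4, c5, c6]
    simp only [mono3, if_neg hD]
    have hE : (0:ℝ) ≤ if ![1, 1, 2] ∈ f.faceAt v then
        1 * (x 0 ^ (1:ℝ) * x 1 ^ (1:ℝ) * x 2 ^ (2:ℝ)) else 0 := by
      split_ifs <;> positivity
    have hF : (0:ℝ) ≤ if ![2, 1, 0] ∈ f.faceAt v then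
        1 * (x 0 ^ (2:ℝ) * x 1 ^ (1:ℝ) * x 2 ^ (0:ℝ)) else 0 := by
      split_ifs <;> positivity
    by_cases hb : ![0, 1, 0] ∈ f.faceAt v
    · obtain ⟨ha, hc⟩ := hB hb
      rw [if_pos hb, if_pos ha, if_pos hc]
      have e : 1 * (x 0 ^ (0:ℝ) * x 1 ^ (2:ℝ) * x 2 ^ (0:ℝ)) +
          (-2 * (x 0 ^ (0:ℝ) * x 1 ^ (1:ℝ) * x 2 ^ (0:ℝ)) +
          1 * (x 0 ^ (0:ℝ) * x 1 ^ (0:ℝ) * x 2 ^ (0:ℝ))) = (x 1 - 1) ^ 2 := by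
        simp
        ring
      have := sq_nonneg (x 1 - 1)
      rw [← e] at this
      linarith
    · rw [if_neg hb]
      have hA : (0:ℝ) ≤ if ![0, 2, 0] ∈ f.faceAt v then
          1 * (x 0 ^ (0:ℝ) * x 1 ^ (2:ℝ) * x 2 ^ (0:ℝ)) else 0 := by
        split_ifs <;> positivity
      have hC : (0:ℝ) ≤ if ![0, 0, 0] ∈ f.faceAt v then
          1 * (x 0 ^ (0:ℝ) * x 1 ^ (0:ℝ) * x 2 ^ (0:ℝ)) else 0 := by
        split_ifs <;> positivity
      linarith
  refine ⟨?_, hev, hpos⟩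
  ext v
  constructor
  · rintro ⟨x, hx, hlt⟩
    by_contra hv
    exact absurd hlt (not_lt.mpr (hpos v hv x hx))
  · intro hv
    have hv : v = 0 := hv
    subst hv
    refine ⟨![1/2, 1, 1/2], ?_, ?_⟩
    · intro i
      fin_cases i <;> simp
    · have : f.evalOn (f.faceAt 0) ![1/2, 1, 1/2] = f.eval ![1/2, 1, 1/2] := by
        unfold evalOn eval
        refine Finset.sum_congr rfl fun μ hμ => if_pos ?_
        rw [mem_faceAt_iff f 0 μ hμ]
        intro ν _
        simp [dot]
      rw [this, hev]
      norm_num
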